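/- arXiv:1403.2410 — 3 statements merged into one kernel-verified Lean document; each statement's English description precedes it below -/
import Mathlib

section
/- Let Γ be an even unimodular lattice, let Λ ⊆ Γ be a primitive nondegenerate sublattice, and let Λ⊥ = {w ∈ Γ : ⟨w,v⟩ = 0 for all v ∈ Λ} be its orthogonal complement. Then there exists a group isomorphism γ : Λ*/Λ → (Λ⊥)*/Λ⊥ such that q_{Λ⊥}(γ(x)) = −q_Λ(x) in ℚ/2ℤ for every x ∈ Λ*/Λ, and, under the identification Γ⊗ℚ = (Λ⊗ℚ) ⊕ (Λ⊥⊗ℚ), one has Γ = {(v,w) ∈ Λ* ⊕ (Λ⊥)* : γ([v]) = [w]}, where [v] and [w] denote the classes of v and w in Λ*/Λ and (Λ⊥)*/Λ⊥. -/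
/-!
STATEMENT 0: Let Γ be an even unimodular lattice, Λ ⊆ Γ a primitive nondegenerate
sublattice and Λ⊥ its orthogonal complement in Γ.  Then there is a group isomorphism
γ : Λ*/Λ → (Λ⊥)*/Λ⊥ reversing the discriminant quadratic forms
(q_{Λ⊥}(γ x) = −q_Λ(x) in ℚ/2ℤ, i.e. B x x + B y y ∈ 2ℤ on representatives) and such
that Γ is the glued lattice {(v,w) ∈ Λ* ⊕ (Λ⊥)* : γ [v] = [w]}.

We realise all lattices inside an ambient rational quadratic space (V, B):
a full even unimodular lattice Γ is a finitely generated ℤ-submodule spanning V,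
with B symmetric, nondegenerate, integer-valued and even on Γ, and equal to its
dual lattice Γ* = {x ∈ spanℚ Γ : ∀ v ∈ Γ, B x v ∈ ℤ}.
-/

noncomputable section

variable {V : Type} [AddCommGroup V] [Module ℚ V]

/-- The dual lattice `L* = {x ∈ L⊗ℚ : ⟨x,v⟩ ∈ ℤ for all v ∈ L}` of a ℤ-lattice `L`
inside the rational quadratic space `(V, B)`. -/
def dualLat (B : V →ₗ[ℚ] V →ₗ[ℚ] ℚ) (L : Submodule ℤ V) : Submodule ℤ V where
  carrier := {x | x ∈ Submodule.span ℚ (L : Set V) ∧ ∀ v ∈ L, ∃ n : ℤ, B x v = (n : ℚ)}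
  zero_mem' := ⟨Submodule.zero_mem _, fun v _ => ⟨0, by simp⟩⟩
  add_mem' := by
    rintro x y ⟨hx1, hx2⟩ ⟨hy1, hy2⟩
    refine ⟨Submodule.add_mem _ hx1 hy1, fun v hv => ?_⟩
    obtain ⟨m, hm⟩ := hx2 v hv
    obtain ⟨k, hk⟩ := hy2 v hv
    exact ⟨m + k, by rw [map_add, LinearMap.add_apply, hm, hk]; push_cast; ring⟩
  smul_mem' := by
    rintro c x ⟨hx1, hx2⟩
    constructor
    · rw [← Int.cast_smul_eq_zsmul ℚ]
      exact Submodule.smul_mem _ _ hx1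
    · intro v hv
      obtain ⟨m, hm⟩ := hx2 v hv
      refine ⟨c * m, ?_⟩
      rw [← Int.cast_smul_eq_zsmul ℚ, map_smul, LinearMap.smul_apply, smul_eq_mul, hm]
      push_cast; ring

/-- The orthogonal complement `{w ∈ Γ : ⟨w,v⟩ = 0 for all v ∈ L}` of `L` in `Γ`. -/
def orthoCompl (B : V →ₗ[ℚ] V →ₗ[ℚ] ℚ) (Γ L : Submodule ℤ V) : Submodule ℤ V where
  carrier := {w | w ∈ Γ ∧ ∀ v ∈ L, B w v = 0}
  zero_mem' := ⟨Submodule.zero_mem _, fun v _ => by simp⟩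
  add_mem' := by
    rintro x y ⟨hx1, hx2⟩ ⟨hy1, hy2⟩
    exact ⟨Submodule.add_mem _ hx1 hy1, fun v hv => by
      rw [map_add, LinearMap.add_apply, hx2 v hv, hy2 v hv, add_zero]⟩
  smul_mem' := by
    rintro c x ⟨hx1, hx2⟩
    refine ⟨Submodule.smul_mem _ _ hx1, fun v hv => ?_⟩
    rw [← Int.cast_smul_eq_zsmul ℚ, map_smul, LinearMap.smul_apply, hx2 v hv, smul_zero]

/-- The discriminant group `L*/L` of a lattice `L`. -/
abbrev discGrp (B : V →ₗ[ℚ] V →ₗ[ℚ] ℚ) (L : Submodule ℤ V) :=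
  ↥(dualLat B L) ⧸ (L.comap (dualLat B L).subtype)

/-- The class `[x] ∈ L*/L` of an element `x ∈ L*`. -/
def discMk (B : V →ₗ[ℚ] V →ₗ[ℚ] ℚ) (L : Submodule ℤ V) (x : V) (hx : x ∈ dualLat B L) :
    discGrp B L :=
  Submodule.Quotient.mk ⟨x, hx⟩

/-!
Let `W = Λ ⊗ ℚ`, let `W'` be its orthogonal complement, and let `π`, `π'` be the two orthogonal
projections, so that `Λ = Γ ∩ W` and `Λ⊥ = Γ ∩ W'`. The lattice `P = π Γ ⊕ π' Γ` has dual
`{u | π u ∈ Γ* ∧ π' u ∈ Γ*}`, which is `Λ ⊕ Λ⊥` as `Γ* = Γ`; since `P` is its own bidual,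
`Λ* = π Γ` and `(Λ⊥)* = π' Γ`. In `V / Γ` we have `[π z] = -[π' z]` for `z ∈ Γ`, so `Λ*` and `(Λ⊥)*`
have the same image there, with kernels `Λ` and `Λ⊥`: this gives `γ`, with `γ [x] = [y]` exactly
when `x + y ∈ Γ`. Orthogonality then turns evenness of `Γ` into
`⟨x, x⟩ + ⟨y, y⟩ = ⟨x + y, x + y⟩ ∈ 2ℤ`.
-/

section QuotientGluing

variable {R E : Type*} [Ring R] [AddCommGroup E] [Module R E]

theorem exists_quotient_equiv_of_range_eq {M N : Type*} [AddCommGroup M] [Module R M]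
    [AddCommGroup N] [Module R N] {f : M →ₗ[R] E} {g : N →ₗ[R] E}
    (h : LinearMap.range f = LinearMap.range g) :
    ∃ e : (M ⧸ LinearMap.ker f) ≃ₗ[R] N ⧸ LinearMap.ker g,
      ∀ x y, e (Submodule.Quotient.mk x) = Submodule.Quotient.mk y ↔ f x = g y := by
  refine ⟨f.quotKerEquivRange ≪≫ₗ LinearEquiv.ofEq _ _ h ≪≫ₗ g.quotKerEquivRange.symm,
    fun x y => ?_⟩
  simp only [LinearEquiv.trans_apply, LinearEquiv.symm_apply_eq, Subtype.ext_iff,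
    LinearEquiv.coe_ofEq_apply, LinearMap.quotKerEquivRange_apply_mk]

/-- `P ⧸ (P ⊓ N)` and `Q ⧸ (Q ⊓ N)` have the same image in `E ⧸ N`; the sign change on the
second factor turns equality in `E ⧸ N` into `x + y ∈ N`. -/
theorem exists_quotient_equiv_iff_add_mem {P Q N : Submodule R E}
    (hP : ∀ x ∈ P, ∃ y ∈ Q, x + y ∈ N) (hQ : ∀ y ∈ Q, ∃ x ∈ P, x + y ∈ N) :
    ∃ e : (P ⧸ N.comap P.subtype) ≃ₗ[R] Q ⧸ N.comap Q.subtype,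
      ∀ x y, e (Submodule.Quotient.mk x) = Submodule.Quotient.mk y ↔ (x + y : E) ∈ N := by
  have mkQ_eq_neg_iff (x y : E) : N.mkQ x = -N.mkQ y ↔ x + y ∈ N := by
    rw [eq_neg_iff_add_eq_zero, ← map_add, Submodule.mkQ_apply, Submodule.Quotient.mk_eq_zero]
  have ker_P : LinearMap.ker (N.mkQ ∘ₗ P.subtype) = N.comap P.subtype := by
    rw [LinearMap.ker_comp, Submodule.ker_mkQ]
  have ker_Q : LinearMap.ker (-(N.mkQ ∘ₗ Q.subtype)) = N.comap Q.subtype := by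
    rw [LinearMap.ker_neg, LinearMap.ker_comp, Submodule.ker_mkQ]
  have range_eq : LinearMap.range (N.mkQ ∘ₗ P.subtype) =
      LinearMap.range (-(N.mkQ ∘ₗ Q.subtype)) := by
    apply le_antisymm
    · rintro _ ⟨⟨x, hx⟩, rfl⟩
      obtain ⟨y, hy, hxy⟩ := hP x hx
      exact ⟨⟨y, hy⟩, ((mkQ_eq_neg_iff x y).2 hxy).symm⟩
    · rintro _ ⟨⟨y, hy⟩, rfl⟩
      obtain ⟨x, hx, hxy⟩ := hQ y hy
      exact ⟨⟨x, hx⟩, (mkQ_eq_neg_iff x y).2 hxy⟩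
  rw [← ker_P, ← ker_Q]
  obtain ⟨e, he⟩ := exists_quotient_equiv_of_range_eq range_eq
  exact ⟨e, fun x y => (he x y).trans (mkQ_eq_neg_iff x y)⟩

end QuotientGluing

section Lattice

variable {R A E : Type*} [CommRing R] [CommRing A] [Algebra R A] [AddCommMonoid E] [Module R E]
  [Module A E] [IsScalarTower R A E]

theorem finite_of_isLattice (N : Submodule R E) [Submodule.IsLattice A N] :
    Module.Finite A E := by
  obtain ⟨s, hs⟩ := Submodule.IsLattice.fg (M := N)
  refine ⟨s, ?_⟩
  rw [← Submodule.span_span_of_tower R, hs, Submodule.IsLattice.span_eq_top]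

end Lattice

section FractionField

variable {R K E : Type*} [CommRing R] [IsDomain R] [Field K] [Algebra R K] [IsFractionRing R K]
  [AddCommGroup E] [Module R E] [Module K E] [IsScalarTower R K E]

theorem exists_smul_mem_of_mem_span {N : Submodule R E} {x : E}
    (hx : x ∈ Submodule.span K (N : Set E)) : ∃ c : R, c ≠ 0 ∧ c • x ∈ N := by
  obtain ⟨c, hc⟩ := multiple_mem_span_of_mem_localization_span (nonZeroDivisors R) K _ x hx
  exact ⟨c, nonZeroDivisors.coe_ne_zero c, by rwa [Submodule.span_eq] at hc⟩

theorem span_inf_restrictScalars (N : Submodule R E) (W : Submodule K E) :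
    Submodule.span K ((N ⊓ W.restrictScalars R : Submodule R E) : Set E) =
      Submodule.span K (N : Set E) ⊓ W := by
  apply le_antisymm
  · exact le_inf (Submodule.span_mono fun _ hx => hx.1) (Submodule.span_le.2 fun _ hx => hx.2)
  · rintro x ⟨hxN, hxW⟩
    obtain ⟨c, hc, hcx⟩ := exists_smul_mem_of_mem_span hxN
    have hc' : algebraMap R K c ≠ 0 := by simpa using hc
    rw [← Submodule.smul_mem_iff _ hc', algebraMap_smul]
    exact Submodule.subset_span ⟨hcx, (W.restrictScalars R).smul_mem c hxW⟩

theorem inf_span_eq_of_smul_mem_imp_mem {N L : Submodule R E} (hLN : L ≤ N)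
    (hL : ∀ (c : R) (x : E), x ∈ N → c ≠ 0 → c • x ∈ L → x ∈ L) :
    N ⊓ (Submodule.span K (L : Set E)).restrictScalars R = L := by
  refine le_antisymm ?_ (le_inf hLN fun _ hx => Submodule.subset_span hx)
  rintro x ⟨hxN, hxL⟩
  obtain ⟨c, hc, hcx⟩ := exists_smul_mem_of_mem_span hxL
  exact hL c x hxN hc hcx

end FractionField

section OrthogonalProjection

variable {R E : Type*} [CommRing R] [AddCommGroup E] [Module R E] {B : LinearMap.BilinForm R E}
  {W W' : Submodule R E}

theorem le_orthogonal_comm (hB : B.IsRefl) : W ≤ B.orthogonal W' ↔ W' ≤ B.orthogonal W :=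
  ⟨fun h w' hw' _ hw => hB _ _ (h hw w' hw'), fun h w hw _ hw' => hB _ _ (h hw' w hw)⟩

theorem isSelfAdjoint_projection (hB : B.IsRefl) (hW : IsCompl W W')
    (hWW' : W ≤ B.orthogonal W') : B.IsSelfAdjoint (W.projection W' hW) := by
  intro x y
  have left : B (W.projection W' hW x) (W'.projection W hW.symm y) = 0 :=
    (le_orthogonal_comm hB).1 hWW' (Submodule.projection_apply_mem _ y) _
      (Submodule.projection_apply_mem hW x)
  have right : B (W'.projection W hW.symm x) (W.projection W' hW y) = 0 :=
    hWW' (Submodule.projection_apply_mem _ y) _ (Submodule.projection_apply_mem hW.symm x)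
  calc B (W.projection W' hW x) y
      = B (W.projection W' hW x) (W.projection W' hW y) := by
        conv_lhs => rw [← Submodule.projection_add_projection_eq_self hW y]
        rw [map_add, left, add_zero]
    _ = B x (W.projection W' hW y) := by
        conv_rhs => rw [← Submodule.projection_add_projection_eq_self hW x]
        rw [map_add, LinearMap.add_apply, right, add_zero]

theorem isCompl_span_orthogonal {K E : Type*} [Field K] [AddCommGroup E] [Module K E]
    [FiniteDimensional K E] {B : LinearMap.BilinForm K E} (hB : B.IsRefl) {s : Set E}
    (hs : ∀ x ∈ Submodule.span K s, (∀ v ∈ s, B x v = 0) → x = 0) :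
    IsCompl (Submodule.span K s) (B.orthogonal (Submodule.span K s)) :=
  (LinearMap.BilinForm.isCompl_orthogonal_iff_disjoint hB).2 <|
    Submodule.disjoint_def.2 fun x hxs hx =>
      hs x hxs fun v hv => hB.eq_iff.1 (hx v (Submodule.subset_span hv))

end OrthogonalProjection

section DualSubmodule

variable {R K E : Type*} [CommRing R] [IsDomain R] [IsPrincipalIdealRing R] [Field K]
  [Algebra R K] [IsFractionRing R K] [AddCommGroup E] [Module R E] [Module K E]
  [IsScalarTower R K E] {B : LinearMap.BilinForm K E}

theorem dualSubmodule_dualSubmodule_of_isLattice (hB : B.Nondegenerate) (hsymm : B.IsSymm)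
    (N : Submodule R E) [Submodule.IsLattice K N] : B.dualSubmodule (B.dualSubmodule N) = N := by
  let b := Module.Free.chooseBasis R N
  have span_b : Submodule.span R (Set.range (b.extendOfIsLattice K)) = N := by
    have range_b : Set.range (b.extendOfIsLattice K) = N.subtype '' Set.range b := by
      rw [← Set.range_comp]
      exact congrArg Set.range (funext fun i => b.extendOfIsLattice_apply K i)
    rw [range_b, Submodule.span_image, b.span_eq, Submodule.map_subtype_top]
  rw [← span_b]
  exact B.dualSubmodule_dualSubmodule_of_basis hB hsymm _

theorem inf_dualSubmodule_dualSubmodule_inf_eq_map_projection (hB : B.Nondegenerate)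
    (hsymm : B.IsSymm) {W W' : Submodule K E} (hW : IsCompl W W')
    (hWW' : W ≤ B.orthogonal W') (N : Submodule R E) [Submodule.IsLattice K N] :
    W.restrictScalars R ⊓ B.dualSubmodule (B.dualSubmodule N ⊓ W.restrictScalars R) =
      N.map ((W.projection W' hW).restrictScalars R) := by
  set π := W.projection W' hW
  set π' := W'.projection W hW.symm
  have adj : B.IsSelfAdjoint π := isSelfAdjoint_projection hsymm.isRefl hW hWW'
  apply le_antisymm
  · rintro x ⟨hxW, hx⟩
    have hπx : π x = x := Submodule.projection_apply_of_mem_left hW hxW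
    -- `N` itself need not contain `x`; the lattice `π N ⊕ π' N` does, since it is its own bidual.
    let P : Submodule R E := N.map (π.restrictScalars R) ⊔ N.map (π'.restrictScalars R)
    have mem_P : x ∈ P := by
      have hNP : N ≤ P := fun z hz => by
        rw [← Submodule.projection_add_projection_eq_self hW z]
        exact Submodule.add_mem_sup ⟨z, hz, rfl⟩ ⟨z, hz, rfl⟩
      have hN : N.FG := Submodule.IsLattice.fg
      have : Submodule.IsLattice K P :=
        Submodule.IsLattice.of_le_of_isLattice_of_fg K hNP ((hN.map _).sup (hN.map _))
      rw [← dualSubmodule_dualSubmodule_of_isLattice hB hsymm P]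
      intro u hu
      have hπu : π u ∈ B.dualSubmodule N := fun z hz => by
        rw [adj u z]
        exact hu _ (Submodule.mem_sup_left ⟨z, hz, rfl⟩)
      rw [← hπx, adj x u]
      exact hx _ ⟨hπu, Submodule.projection_apply_mem hW u⟩
    obtain ⟨_, ⟨z, hz, rfl⟩, _, ⟨z', -, rfl⟩, hzx⟩ := Submodule.mem_sup.1 mem_P
    refine ⟨z, hz, ?_⟩
    have hππ' : π (π' z') = 0 :=
      (Submodule.projection_apply_eq_zero_iff hW).2 (Submodule.projection_apply_mem hW.symm z')
    have hππ : π (π z) = π z :=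
      Submodule.projection_apply_of_mem_left hW (Submodule.projection_apply_mem hW z)
    calc π z = π (π z + π' z') := by rw [map_add, hππ', hππ, add_zero]
      _ = x := (congrArg π hzx).trans hπx
  · rintro _ ⟨z, hz, rfl⟩
    refine ⟨Submodule.projection_apply_mem hW z, fun v ⟨hv, hvW⟩ => ?_⟩
    have : B (π z) v = B v z := by
      rw [adj z v, Submodule.projection_apply_of_mem_left hW hvW]
      exact hsymm.eq z v
    exact this ▸ hv z hz

end DualSubmodule

section DiscriminantGroup

variable {B : LinearMap.BilinForm ℚ V}

theorem mem_dualLat_iff {L : Submodule ℤ V} {x : V} :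
    x ∈ dualLat B L ↔ x ∈ Submodule.span ℚ (L : Set V) ∧ x ∈ B.dualSubmodule L := by
  simp [dualLat, LinearMap.BilinForm.mem_dualSubmodule, eq_comm]

theorem dualLat_eq_dualSubmodule (Γ : Submodule ℤ V) [Submodule.IsLattice ℚ Γ] :
    dualLat B Γ = B.dualSubmodule Γ := by
  ext x
  simp [mem_dualLat_iff, Submodule.IsLattice.span_eq_top]

theorem orthoCompl_eq_inf_orthogonal (hsymm : B.IsSymm) (Γ L : Submodule ℤ V) :
    orthoCompl B Γ L =
      Γ ⊓ (B.orthogonal (Submodule.span ℚ (L : Set V))).restrictScalars ℤ := by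
  ext w
  refine and_congr_right fun _ => ⟨fun hw => ?_, fun hw v hv => ?_⟩
  · have : Submodule.span ℚ (L : Set V) ≤ LinearMap.ker (B w) := Submodule.span_le.2 hw
    exact fun v hv => hsymm.eq_iff.1 (this hv)
  · exact hsymm.eq_iff.1 (hw v (Submodule.subset_span hv))

variable {W W' : Submodule ℚ V} {Γ : Submodule ℤ V}

theorem dualLat_inf_le (B : LinearMap.BilinForm ℚ V) (Γ : Submodule ℤ V) (W : Submodule ℚ V) :
    dualLat B (Γ ⊓ W.restrictScalars ℤ) ≤ W.restrictScalars ℤ :=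
  fun _ hx => (Submodule.span_le (p := W)).2 (fun _ hv => hv.2) hx.1

theorem comap_subtype_dualLat_inf (B : LinearMap.BilinForm ℚ V) (Γ : Submodule ℤ V)
    (W : Submodule ℚ V) :
    (Γ ⊓ W.restrictScalars ℤ).comap (dualLat B (Γ ⊓ W.restrictScalars ℤ)).subtype =
      Γ.comap (dualLat B (Γ ⊓ W.restrictScalars ℤ)).subtype := by
  ext x
  exact and_iff_left (dualLat_inf_le B Γ W x.2)

variable [Submodule.IsLattice ℚ Γ]

theorem dualLat_inf_eq_map_projection (hB : B.Nondegenerate) (hsymm : B.IsSymm)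
    (hW : IsCompl W W') (hWW' : W ≤ B.orthogonal W') (hΓ : dualLat B Γ = Γ) :
    dualLat B (Γ ⊓ W.restrictScalars ℤ) = Γ.map ((W.projection W' hW).restrictScalars ℤ) := by
  rw [dualLat_eq_dualSubmodule] at hΓ
  rw [← inf_dualSubmodule_dualSubmodule_inf_eq_map_projection hB hsymm hW hWW' Γ, hΓ]
  ext x
  rw [mem_dualLat_iff, span_inf_restrictScalars, Submodule.IsLattice.span_eq_top, top_inf_eq]
  rfl

theorem exists_mem_dualLat_add_eq (hB : B.Nondegenerate) (hsymm : B.IsSymm)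
    (hW : IsCompl W W') (hWW' : W ≤ B.orthogonal W') (hΓ : dualLat B Γ = Γ) {z : V}
    (hz : z ∈ Γ) :
    ∃ x ∈ dualLat B (Γ ⊓ W.restrictScalars ℤ), ∃ y ∈ dualLat B (Γ ⊓ W'.restrictScalars ℤ),
      z = x + y := by
  have hW'W := (le_orthogonal_comm hsymm.isRefl).1 hWW'
  rw [dualLat_inf_eq_map_projection hB hsymm hW hWW' hΓ,
    dualLat_inf_eq_map_projection hB hsymm hW.symm hW'W hΓ]
  exact ⟨_, ⟨z, hz, rfl⟩, _, ⟨z, hz, rfl⟩,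
    (Submodule.projection_add_projection_eq_self hW z).symm⟩

theorem exists_mem_dualLat_add_mem (hB : B.Nondegenerate) (hsymm : B.IsSymm)
    (hW : IsCompl W W') (hWW' : W ≤ B.orthogonal W') (hΓ : dualLat B Γ = Γ) {x : V}
    (hx : x ∈ dualLat B (Γ ⊓ W.restrictScalars ℤ)) :
    ∃ y ∈ dualLat B (Γ ⊓ W'.restrictScalars ℤ), x + y ∈ Γ := by
  have hW'W := (le_orthogonal_comm hsymm.isRefl).1 hWW'
  rw [dualLat_inf_eq_map_projection hB hsymm hW hWW' hΓ] at hx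
  rw [dualLat_inf_eq_map_projection hB hsymm hW.symm hW'W hΓ]
  obtain ⟨z, hz, rfl⟩ := hx
  refine ⟨_, ⟨z, hz, rfl⟩, ?_⟩
  exact (Submodule.projection_add_projection_eq_self hW z).symm ▸ hz

theorem exists_discGrp_equiv_iff_add_mem (hB : B.Nondegenerate) (hsymm : B.IsSymm)
    (hW : IsCompl W W') (hWW' : W ≤ B.orthogonal W') (hΓ : dualLat B Γ = Γ) :
    ∃ γ : discGrp B (Γ ⊓ W.restrictScalars ℤ) ≃ₗ[ℤ] discGrp B (Γ ⊓ W'.restrictScalars ℤ),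
      ∀ x hx y hy, γ (discMk B _ x hx) = discMk B _ y hy ↔ x + y ∈ Γ := by
  unfold discMk discGrp
  rw [comap_subtype_dualLat_inf, comap_subtype_dualLat_inf]
  obtain ⟨γ, hγ⟩ := exists_quotient_equiv_iff_add_mem
    (fun x hx => exists_mem_dualLat_add_mem hB hsymm hW hWW' hΓ hx) fun y hy => by
      simpa only [add_comm y] using exists_mem_dualLat_add_mem hB hsymm hW.symm
        ((le_orthogonal_comm hsymm.isRefl).1 hWW') hΓ hy
  exact ⟨γ, fun x hx y hy => hγ ⟨x, hx⟩ ⟨y, hy⟩⟩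

theorem exists_discGrp_antiisometry_of_isCompl (hB : B.Nondegenerate) (hsymm : B.IsSymm)
    (hW : IsCompl W W') (hWW' : W ≤ B.orthogonal W') (hΓ : dualLat B Γ = Γ)
    (heven : ∀ v ∈ Γ, ∃ n : ℤ, B v v = 2 * (n : ℚ)) {L M : Submodule ℤ V}
    (hL : Γ ⊓ W.restrictScalars ℤ = L) (hM : Γ ⊓ W'.restrictScalars ℤ = M) :
    ∃ γ : discGrp B L ≃+ discGrp B M,
      (∀ x hx y hy, γ (discMk B L x hx) = discMk B M y hy →
        ∃ n : ℤ, B x x + B y y = 2 * (n : ℚ)) ∧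
      ∀ z, z ∈ Γ ↔ ∃ x hx y hy, z = x + y ∧ γ (discMk B L x hx) = discMk B M y hy := by
  subst hL hM
  obtain ⟨γ, hγ⟩ := exists_discGrp_equiv_iff_add_mem hB hsymm hW hWW' hΓ
  refine ⟨γ.toAddEquiv, fun x hx y hy hxy => ?_, fun z => ⟨fun hz => ?_, ?_⟩⟩
  · have hyx : B y x = 0 := hWW' (dualLat_inf_le B Γ W hx) y (dualLat_inf_le B Γ W' hy)
    obtain ⟨n, hn⟩ := heven _ ((hγ x hx y hy).1 hxy)
    refine ⟨n, ?_⟩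
    rw [← hn, map_add, map_add, LinearMap.add_apply, LinearMap.add_apply, hyx,
      hsymm.eq_iff.1 hyx, add_zero, zero_add]
  · obtain ⟨x, hx, y, hy, rfl⟩ := exists_mem_dualLat_add_eq hB hsymm hW hWW' hΓ hz
    exact ⟨x, hx, y, hy, rfl, (hγ x hx y hy).2 hz⟩
  · rintro ⟨x, hx, y, hy, rfl, hxy⟩
    exact (hγ x hx y hy).1 hxy

end DiscriminantGroup

theorem statement0
    (B : V →ₗ[ℚ] V →ₗ[ℚ] ℚ)
    (hsymm : ∀ x y, B x y = B y x)
    (hnondeg : ∀ x : V, (∀ y : V, B x y = 0) → x = 0)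
    (Γ : Submodule ℤ V)
    (hfg : Γ.FG)
    (hfull : Submodule.span ℚ (Γ : Set V) = ⊤)
    (hint : ∀ v ∈ Γ, ∀ w ∈ Γ, ∃ n : ℤ, B v w = (n : ℚ))
    (heven : ∀ v ∈ Γ, ∃ n : ℤ, B v v = 2 * (n : ℚ))
    (hunimod : dualLat B Γ = Γ)
    (Λ : Submodule ℤ V)
    (hsub : Λ ≤ Γ)
    (hprim : ∀ (c : ℤ) (x : V), x ∈ Γ → c ≠ 0 → c • x ∈ Λ → x ∈ Λ)
    (hΛnondeg : ∀ x ∈ Submodule.span ℚ (Λ : Set V), (∀ v ∈ Λ, B x v = 0) → x = 0) :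
    ∃ γ : discGrp B Λ ≃+ discGrp B (orthoCompl B Γ Λ),
      (∀ (x : V) (hx : x ∈ dualLat B Λ) (y : V) (hy : y ∈ dualLat B (orthoCompl B Γ Λ)),
        γ (discMk B Λ x hx) = discMk B (orthoCompl B Γ Λ) y hy →
          ∃ n : ℤ, B x x + B y y = 2 * (n : ℚ)) ∧
      (∀ z : V, z ∈ Γ ↔
        ∃ (x : V) (hx : x ∈ dualLat B Λ) (y : V) (hy : y ∈ dualLat B (orthoCompl B Γ Λ)),
          z = x + y ∧
          γ (discMk B Λ x hx) = discMk B (orthoCompl B Γ Λ) y hy) := by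
  have hB : LinearMap.BilinForm.IsSymm B := ⟨hsymm⟩
  have hB' : LinearMap.BilinForm.Nondegenerate B :=
    hB.isRefl.nondegenerate_iff_separatingLeft.2 hnondeg
  have : Submodule.IsLattice ℚ Γ := ⟨hfg, hfull⟩
  have : FiniteDimensional ℚ V := finite_of_isLattice Γ
  exact exists_discGrp_antiisometry_of_isCompl hB' hB (isCompl_span_orthogonal hB.isRefl hΛnondeg)
    (LinearMap.BilinForm.le_orthogonal_orthogonal hB.isRefl) hunimod heven
    (inf_span_eq_of_smul_mem_imp_mem hsub hprim) (orthoCompl_eq_inf_orthogonal hB Γ Λ).symm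

end
end

section
/- Let Sp(1) denote the multiplicative group of unit quaternions and let ω = (−1 + i + j + k)/2 ∈ Sp(1). The subgroup of Sp(1) × Sp(1) (with componentwise multiplication) generated by the five pairs (1,i), (1,j), (i,1), (j,1), (ω,ω) has order 192. -/
/-!
STATEMENT 17: Let Sp(1) be the multiplicative group of unit quaternions and
ω = (−1 + i + j + k)/2 ∈ Sp(1).  The subgroup of Sp(1) × Sp(1) generated by the five
pairs (1,i), (1,j), (i,1), (j,1), (ω,ω) has order 192.
-/

open Quaternion

noncomputable section

/-- The group `Sp(1) = {q ∈ ℍ : |q| = 1}` of unit quaternions, as a subgroup of the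
group of units of ℍ. -/
def Sp1 : Subgroup ℍ[ℝ]ˣ where
  carrier := {q | ‖(q : ℍ[ℝ])‖ = 1}
  one_mem' := by simp
  mul_mem' := by
    intro a b ha hb
    show ‖((a * b : ℍ[ℝ]ˣ) : ℍ[ℝ])‖ = 1
    rw [Units.val_mul, norm_mul, ha, hb, one_mul]
  inv_mem' := by
    intro a ha
    show ‖((a⁻¹ : ℍ[ℝ]ˣ) : ℍ[ℝ])‖ = 1
    rw [Units.val_inv_eq_inv_val, norm_inv, ha, inv_one]

/-- Build an element of `Sp(1)` from a quaternion of norm one. -/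
def mkSp1 (x : ℍ[ℝ]) (hx : ‖x‖ = 1) : ↥Sp1 :=
  ⟨Units.mk0 x (by intro h; rw [h, norm_zero] at hx; exact zero_ne_one hx), hx⟩

def quatI : ℍ[ℝ] := ⟨0, 1, 0, 0⟩
def quatJ : ℍ[ℝ] := ⟨0, 0, 1, 0⟩
/-- `ω = (−1 + i + j + k)/2`. -/
def quatOmega : ℍ[ℝ] := ⟨-(1/2), 1/2, 1/2, 1/2⟩

lemma norm_quatI : ‖quatI‖ = 1 := by
  show Real.sqrt (Quaternion.normSq _) = 1
  rw [Quaternion.normSq_def']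
  show Real.sqrt (quatI.re ^ 2 + quatI.imI ^ 2 + quatI.imJ ^ 2 + quatI.imK ^ 2) = 1
  norm_num [quatI]

lemma norm_quatJ : ‖quatJ‖ = 1 := by
  show Real.sqrt (Quaternion.normSq _) = 1
  rw [Quaternion.normSq_def']
  show Real.sqrt (quatJ.re ^ 2 + quatJ.imI ^ 2 + quatJ.imJ ^ 2 + quatJ.imK ^ 2) = 1
  norm_num [quatJ]

lemma norm_quatOmega : ‖quatOmega‖ = 1 := by
  show Real.sqrt (Quaternion.normSq _) = 1
  rw [Quaternion.normSq_def']
  show Real.sqrt (quatOmega.re ^ 2 + quatOmega.imI ^ 2 + quatOmega.imJ ^ 2 +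
    quatOmega.imK ^ 2) = 1
  norm_num [quatOmega]

/-- The five generating pairs (1,i), (1,j), (i,1), (j,1), (ω,ω) in Sp(1) × Sp(1). -/
def gens : Set (↥Sp1 × ↥Sp1) :=
  {(1, mkSp1 quatI norm_quatI),
   (1, mkSp1 quatJ norm_quatJ),
   (mkSp1 quatI norm_quatI, 1),
   (mkSp1 quatJ norm_quatJ, 1),
   (mkSp1 quatOmega norm_quatOmega, mkSp1 quatOmega norm_quatOmega)}

/-! The normal subgroup `Q₈ × Q₈`, where `Q₈ = ⟨i, j⟩`, has order `8²`, and `(ω, ω)` normalizes it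
because conjugation by `ω` permutes `i`, `j` and `k` cyclically. Since `ω` has order `3`, it lies
outside `Q₈`, and adjoining `(ω, ω)` multiplies the order by `3`. The order of `Q₈` itself comes
from the same principle: adjoining `j` to the cyclic group `⟨i⟩` of order `4` multiplies the order
by `2`. -/

section NormalizedExtension

variable {G : Type*} [Group G]

lemma mem_normalizer_closure_of_finite {s : Set G} [Finite (Subgroup.closure s)] {g : G}
    (hg : ∀ x ∈ s, g * x * g⁻¹ ∈ Subgroup.closure s) :
    g ∈ Subgroup.normalizer (Subgroup.closure s : Set G) := by
  have closure_le_comap : Subgroup.closure s ≤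
      (Subgroup.closure s).comap (MulAut.conj g).toMonoidHom :=
    (Subgroup.closure_le _).2 hg
  exact Subgroup.mem_normalizer_fintype fun _ hx => closure_le_comap hx

lemma relIndex_sup_left_of_le_normalizer {N H : Subgroup G}
    (hH : H ≤ Subgroup.normalizer (N : Set G)) : N.relIndex (N ⊔ H) = N.relIndex H := by
  have := Subgroup.normal_subgroupOf_of_le_normalizer hH
  have := Subgroup.normal_subgroupOf_sup_of_le_normalizer hH
  rw [sup_comm]
  exact Nat.card_congr (QuotientGroup.quotientInfEquivProdNormalizerQuotient H N hH).symm.toEquiv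

lemma relIndex_zpowers_of_pow_prime_mem {p : ℕ} (hp : p.Prime) {N : Subgroup G} {g : G}
    (hg : g ∉ N) (hgp : g ^ p ∈ N) : N.relIndex (Subgroup.zpowers g) = p := by
  have : Fact p.Prime := ⟨hp⟩
  let Q := Subgroup.zpowers g ⧸ N.subgroupOf (Subgroup.zpowers g)
  let q : Q := QuotientGroup.mk ⟨g, Subgroup.mem_zpowers g⟩
  have orderOf_q : orderOf q = p :=
    orderOf_eq_prime ((QuotientGroup.eq_one_iff _).2 hgp) (mt (QuotientGroup.eq_one_iff _).1 hg)
  have q_generates : ∀ r : Q, r ∈ Subgroup.zpowers q := by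
    rintro ⟨_, n, rfl⟩
    exact ⟨n, rfl⟩
  exact (orderOf_eq_card_of_forall_mem_zpowers q_generates).symm.trans orderOf_q

lemma natCard_sup_zpowers_of_pow_prime_mem {p : ℕ} (hp : p.Prime) {N : Subgroup G} {g : G}
    (hgN : g ∈ Subgroup.normalizer (N : Set G)) (hg : g ∉ N) (hgp : g ^ p ∈ N) :
    Nat.card ↥(N ⊔ Subgroup.zpowers g) = Nat.card N * p := by
  rw [← N.relIndex_bot_left, ← (N ⊔ Subgroup.zpowers g).relIndex_bot_left,
    ← Subgroup.relIndex_mul_relIndex ⊥ N _ bot_le le_sup_left,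
    relIndex_sup_left_of_le_normalizer (Subgroup.zpowers_le.2 hgN),
    relIndex_zpowers_of_pow_prime_mem hp hg hgp]

end NormalizedExtension

section Product

variable {G H : Type*} [Group G] [Group H]

lemma closure_inl_union_inr (s : Set G) (t : Set H) :
    Subgroup.closure (MonoidHom.inl G H '' s ∪ MonoidHom.inr G H '' t) =
      (Subgroup.closure s).prod (Subgroup.closure t) := by
  rw [Subgroup.closure_union, ← MonoidHom.map_closure, ← MonoidHom.map_closure]
  refine le_antisymm (sup_le ?_ ?_) (Subgroup.prod_le_iff.2 ⟨le_sup_left, le_sup_right⟩)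
  · simp [Subgroup.le_prod_iff, Subgroup.map_map]
  · simp [Subgroup.le_prod_iff, Subgroup.map_map]

lemma mk_mem_normalizer_prod {N : Subgroup G} {K : Subgroup H} {g : G} {h : H}
    (hg : g ∈ Subgroup.normalizer (N : Set G)) (hh : h ∈ Subgroup.normalizer (K : Set H)) :
    (g, h) ∈ Subgroup.normalizer (N.prod K : Set (G × H)) := fun x =>
  and_congr (hg x.1) (hh x.2)

end Product

/-- Two elements generating a quaternion group of order eight, in the roles of `i` and `j`. The
condition `x ^ 2 ≠ 1` excludes the proper quotients of that group. -/
structure IsQuaternionPair {G : Type*} [Group G] (x y : G) : Prop where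
  sq_ne_one : x ^ 2 ≠ 1
  sq_eq_sq : y ^ 2 = x ^ 2
  semiconj_inv : SemiconjBy y x x⁻¹

namespace IsQuaternionPair

variable {G : Type*} [Group G] {x y w : G}

lemma not_commute (h : IsQuaternionPair x y) : ¬ Commute y x := by
  intro hyx
  have x_eq_inv : x = x⁻¹ := mul_right_cancel (hyx.eq.symm.trans h.semiconj_inv.eq)
  exact h.sq_ne_one (by rw [sq, ← eq_inv_iff_mul_eq_one]; exact x_eq_inv)

lemma orderOf_left (h : IsQuaternionPair x y) : orderOf x = 4 := by
  have sq_eq_inv_sq : x ^ 2 = x⁻¹ ^ 2 := by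
    have commute_sq : Commute y (x ^ 2) := h.sq_eq_sq ▸ (Commute.refl y).pow_right 2
    exact mul_right_cancel (commute_sq.eq.symm.trans (h.semiconj_inv.pow_right 2).eq)
  have pow_four : x ^ 4 = 1 := by
    rw [show 4 = 2 + 2 from rfl, pow_add, ← eq_inv_iff_mul_eq_one, ← inv_pow]
    exact sq_eq_inv_sq
  exact orderOf_eq_prime_pow (p := 2) (n := 1) (by simpa using h.sq_ne_one)
    (by simpa using pow_four)

lemma notMem_zpowers (h : IsQuaternionPair x y) : y ∉ Subgroup.zpowers x := by
  rintro ⟨n, rfl⟩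
  exact h.not_commute (Commute.zpow_self x n)

lemma natCard_closure (h : IsQuaternionPair x y) : Nat.card (Subgroup.closure {x, y}) = 8 := by
  have card_zpowers : Nat.card (Subgroup.zpowers x) = 4 := by rw [Nat.card_zpowers, h.orderOf_left]
  have y_normalizes : y ∈ Subgroup.normalizer (Subgroup.zpowers x : Set G) := by
    have : Finite (Subgroup.zpowers x) := Nat.finite_of_card_ne_zero (by lia)
    rw [Subgroup.zpowers_eq_closure] at this ⊢
    refine mem_normalizer_closure_of_finite ?_
    rintro _ rfl
    rw [h.semiconj_inv.eq, mul_inv_cancel_right]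
    exact inv_mem (Subgroup.mem_closure_singleton_self _)
  have sq_mem : y ^ 2 ∈ Subgroup.zpowers x := h.sq_eq_sq ▸ Subgroup.npow_mem_zpowers x 2
  rw [Set.insert_eq, Subgroup.closure_union, ← Subgroup.zpowers_eq_closure,
    ← Subgroup.zpowers_eq_closure,
    natCard_sup_zpowers_of_pow_prime_mem Nat.prime_two y_normalizes h.notMem_zpowers sq_mem,
    card_zpowers]

lemma finite_closure (h : IsQuaternionPair x y) : Finite (Subgroup.closure {x, y}) :=
  Nat.finite_of_card_ne_zero (by rw [h.natCard_closure]; lia)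

lemma mem_normalizer_closure (h : IsQuaternionPair x y) (hx : SemiconjBy w x (x * y))
    (hy : SemiconjBy w y x) :
    w ∈ Subgroup.normalizer (Subgroup.closure {x, y} : Set G) := by
  have := h.finite_closure
  have x_mem : x ∈ Subgroup.closure {x, y} := Subgroup.subset_closure (by simp)
  have y_mem : y ∈ Subgroup.closure {x, y} := Subgroup.subset_closure (by simp)
  refine mem_normalizer_closure_of_finite ?_
  rintro _ (rfl | rfl)
  · rw [hx.eq, mul_inv_cancel_right]
    exact mul_mem x_mem y_mem
  · rw [hy.eq, mul_inv_cancel_right]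
    exact x_mem

lemma notMem_closure_of_pow_three (h : IsQuaternionPair x y) (hy : SemiconjBy w y x)
    (hw : w ^ 3 = 1) : w ∉ Subgroup.closure {x, y} := by
  intro w_mem
  have w_ne_one : w ≠ 1 := by
    rintro rfl
    obtain rfl : y = x := by simpa using hy.eq
    exact h.not_commute (Commute.refl y)
  have orderOf_w : orderOf w = 3 := orderOf_eq_prime hw w_ne_one
  have three_dvd_eight : 3 ∣ 8 :=
    orderOf_w ▸ h.natCard_closure ▸ Subgroup.orderOf_dvd_natCard _ w_mem
  lia

lemma natCard_closure_prod_sup_zpowers_diag (h : IsQuaternionPair x y)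
    (hx : SemiconjBy w x (x * y)) (hy : SemiconjBy w y x) (hw : w ^ 3 = 1) :
    Nat.card ↥((Subgroup.closure {x, y}).prod (Subgroup.closure {x, y}) ⊔
      Subgroup.zpowers (w, w)) = 192 := by
  have diag_normalizes := mk_mem_normalizer_prod (h.mem_normalizer_closure hx hy)
    (h.mem_normalizer_closure hx hy)
  have diag_notMem : (w, w) ∉ (Subgroup.closure {x, y}).prod (Subgroup.closure {x, y}) :=
    fun hmem => h.notMem_closure_of_pow_three hy hw hmem.1
  have diag_pow_mem : (w, w) ^ 3 ∈ (Subgroup.closure {x, y}).prod (Subgroup.closure {x, y}) := by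
    simp [hw, Subgroup.mem_prod]
  rw [natCard_sup_zpowers_of_pow_prime_mem Nat.prime_three diag_normalizes diag_notMem
    diag_pow_mem, Nat.card_congr (Subgroup.prodEquiv _ _).toEquiv, Nat.card_prod, h.natCard_closure]

end IsQuaternionPair

lemma sp1_ext {q r : Sp1} (h : ((q : ℍ[ℝ]ˣ) : ℍ[ℝ]) = ((r : ℍ[ℝ]ˣ) : ℍ[ℝ])) : q = r :=
  Subtype.ext (Units.ext h)

attribute [simps] quatI quatJ quatOmega

lemma quatI_sq : quatI ^ 2 = -1 := by
  ext <;> simp [sq]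

lemma quatJ_sq : quatJ ^ 2 = -1 := by
  ext <;> simp [sq]

lemma quatI_mul_quatJ_mul_quatI : quatI * quatJ * quatI = quatJ := by
  ext <;> simp

lemma quatOmega_mul_quatI : quatOmega * quatI = quatI * quatJ * quatOmega := by
  ext <;> simp

lemma quatOmega_mul_quatJ : quatOmega * quatJ = quatI * quatOmega := by
  ext <;> simp

lemma quatOmega_pow_three : quatOmega ^ 3 = 1 := by
  ext <;> norm_num [pow_three]

lemma isQuaternionPair_quatI_quatJ :
    IsQuaternionPair (mkSp1 quatI norm_quatI) (mkSp1 quatJ norm_quatJ) where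
  sq_ne_one h := by
    have quatI_sq_eq_one : quatI ^ 2 = 1 :=
      congrArg (fun q : Sp1 => ((q : ℍ[ℝ]ˣ) : ℍ[ℝ])) h
    have neg_one_eq_one : (-1 : ℝ) = 1 :=
      congrArg QuaternionAlgebra.re (quatI_sq.symm.trans quatI_sq_eq_one)
    norm_num at neg_one_eq_one
  sq_eq_sq := sp1_ext (quatJ_sq.trans quatI_sq.symm)
  semiconj_inv := by
    rw [SemiconjBy, eq_inv_mul_iff_mul_eq, ← mul_assoc]
    exact sp1_ext quatI_mul_quatJ_mul_quatI

lemma gens_eq_image_union :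
    gens = MonoidHom.inl Sp1 Sp1 '' {mkSp1 quatI norm_quatI, mkSp1 quatJ norm_quatJ} ∪
      MonoidHom.inr Sp1 Sp1 '' {mkSp1 quatI norm_quatI, mkSp1 quatJ norm_quatJ} ∪
      {(mkSp1 quatOmega norm_quatOmega, mkSp1 quatOmega norm_quatOmega)} := by
  ext
  simp only [gens, Set.image_pair, MonoidHom.inl_apply, MonoidHom.inr_apply, Set.mem_union,
    Set.mem_insert_iff, Set.mem_singleton_iff]
  tauto

theorem statement17 : Nat.card ↥(Subgroup.closure gens) = 192 := by
  rw [gens_eq_image_union, Subgroup.closure_union, closure_inl_union_inr,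
    ← Subgroup.zpowers_eq_closure]
  exact isQuaternionPair_quatI_quatJ.natCard_closure_prod_sup_zpowers_diag
    (sp1_ext quatOmega_mul_quatI) (sp1_ext quatOmega_mul_quatJ) (sp1_ext quatOmega_pow_three)

end
end

section
/- Let ζ = e^{2πi/5} ∈ ℂ. Then (1/5) · Σ_{i=0}^{4} Σ_{j=0}^{4} (1 − ζ^{d(i,j)})(1 − ζ^{−d(i,j)})(1 − ζ^{2·d(i,j)})(1 − ζ^{−2·d(i,j)}) = 24, where d(i,j) = gcd(gcd(i,j), 5) (so that d(0,0) = 5 and the corresponding term vanishes). -/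
/-!
STATEMENT 18: Let ζ = e^{2πi/5}.  Then
(1/5) Σ_{i=0}^{4} Σ_{j=0}^{4} (1−ζ^{d})(1−ζ^{−d})(1−ζ^{2d})(1−ζ^{−2d}) = 24,
where d = d(i,j) = gcd(gcd(i,j),5).  (This computes the Witten index of the orbifold
of a T⁴ sigma model by an order-5 symmetry in class 5A, giving the Euler number 24 of
a K3 model.)
-/

open Complex

noncomputable def zeta5 : ℂ := Complex.exp (2 * Real.pi * Complex.I / 5)

/-!
Put `n = 5` and `d = gcd (i, j, n)`. Since `ζ ^ (-k * d) = ζ ^ ((n - k) * d)`, the four factors of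
a term are the `1 - ζ ^ (k * d)` with `0 < k < n`. If `ζ ^ d` is primitive, their product is the
value `n` of `(X ^ n - 1) / (X - 1)` at `X = 1`; otherwise `ζ ^ d` has order less than `n`, and one
of the factors vanishes. So the average counts the pairs `(i, j)` with `gcd (i, j)` coprime to `n`,
which are all but `(0, 0)` when `n` is prime.
-/

section

open Finset

variable {R K : Type*} [CommRing R] [Field K]

theorem prod_one_sub_pow_eq_zero_of_pow_eq_one {x : R} {m n : ℕ} (hm : 0 < m) (hmn : m ≤ n)
    (hx : x ^ m = 1) : ∏ k ∈ range n, (1 - x ^ (k + 1)) = 0 :=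
  prod_eq_zero (mem_range.mpr (by lia : m - 1 < n)) (by rw [Nat.sub_add_cancel hm, hx, sub_self])

theorem prod_one_sub_pow_pow_eq_ite_coprime [IsDomain R] {ζ : R} {n : ℕ}
    (hζ : IsPrimitiveRoot ζ (n + 1)) (d : ℕ) :
    ∏ k ∈ range n, (1 - (ζ ^ d) ^ (k + 1)) = if d.Coprime (n + 1) then (n + 1 : R) else 0 := by
  split_ifs with hd
  · exact (hζ.pow_of_coprime d hd).prod_one_sub_pow_eq_order
  · have h_dvd : orderOf (ζ ^ d) ∣ n + 1 :=
      orderOf_dvd_of_pow_eq_one (by rw [pow_right_comm, hζ.pow_eq_one, one_pow])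
    have h_ne : orderOf (ζ ^ d) ≠ n + 1 := fun h ↦
      hd ((hζ.pow_iff_coprime n.succ_pos d).mp (h ▸ IsPrimitiveRoot.orderOf _))
    have h_lt : orderOf (ζ ^ d) < n + 1 := (Nat.le_of_dvd n.succ_pos h_dvd).lt_of_ne h_ne
    exact prod_one_sub_pow_eq_zero_of_pow_eq_one (Nat.pos_of_dvd_of_pos h_dvd n.succ_pos)
      (Nat.le_of_lt_succ h_lt) (pow_orderOf_eq_one _)

theorem sum_prod_one_sub_pow_gcd_eq_card [IsDomain R] {ζ : R} {n : ℕ}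
    (hζ : IsPrimitiveRoot ζ (n + 1)) :
    ∑ i ∈ range (n + 1), ∑ j ∈ range (n + 1),
        ∏ k ∈ range n, (1 - (ζ ^ Nat.gcd (Nat.gcd i j) (n + 1)) ^ (k + 1)) =
      (n + 1) * #{ij ∈ range (n + 1) ×ˢ range (n + 1) |
        (Nat.gcd ij.1 ij.2).Coprime (n + 1)} := by
  have h_coprime (a : ℕ) : (Nat.gcd a (n + 1)).Coprime (n + 1) ↔ a.Coprime (n + 1) := by
    rw [Nat.Coprime, Nat.gcd_assoc, Nat.gcd_self]
  simp only [prod_one_sub_pow_pow_eq_ite_coprime hζ, h_coprime]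
  rw [← sum_product', ← sum_filter, sum_const, nsmul_eq_mul, mul_comm]

theorem prod_one_sub_pow_mul_one_sub_inv_pow {x : K} {m : ℕ} (hx : x ^ (2 * m + 1) = 1) :
    ∏ k ∈ range m, (1 - x ^ (k + 1)) * (1 - (x ^ (k + 1))⁻¹) =
      ∏ k ∈ range (2 * m), (1 - x ^ (k + 1)) := by
  have h_inv (k : ℕ) (hk : k ∈ range m) : (x ^ (k + 1))⁻¹ = x ^ (m + (m - 1 - k) + 1) := by
    have h_exp : k + 1 + (m + (m - 1 - k) + 1) = 2 * m + 1 := by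
      have := mem_range.mp hk
      lia
    exact inv_eq_of_mul_eq_one_right (by rw [← pow_add, h_exp, hx])
  rw [prod_mul_distrib, two_mul, prod_range_add, ← prod_range_reflect (fun k ↦ 1 - x ^ (m + k + 1))]
  exact congrArg _ (prod_congr rfl fun k hk ↦ by rw [h_inv k hk])

theorem statement18_general {ζ : K} (hζ : IsPrimitiveRoot ζ 5) :
    (1 / 5 : K) * ∑ i ∈ range 5, ∑ j ∈ range 5,
      (1 - ζ ^ Nat.gcd (Nat.gcd i j) 5) * (1 - (ζ ^ Nat.gcd (Nat.gcd i j) 5)⁻¹) *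
      (1 - ζ ^ (2 * Nat.gcd (Nat.gcd i j) 5)) *
      (1 - (ζ ^ (2 * Nat.gcd (Nat.gcd i j) 5))⁻¹) = 24 := by
  have h_five : (5 : K) ≠ 0 := by exact_mod_cast (hζ.neZero' (n := 5)).out
  have h_term (d : ℕ) : (1 - ζ ^ d) * (1 - (ζ ^ d)⁻¹) * (1 - ζ ^ (2 * d)) *
      (1 - (ζ ^ (2 * d))⁻¹) = ∏ k ∈ range 4, (1 - (ζ ^ d) ^ (k + 1)) := by
    have h_pow : (ζ ^ d) ^ (2 * 2 + 1) = 1 := by rw [pow_right_comm, hζ.pow_eq_one, one_pow]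
    rw [← prod_one_sub_pow_mul_one_sub_inv_pow h_pow, prod_range_succ, prod_range_one, zero_add,
      pow_one, one_add_one_eq_two, ← pow_mul, mul_comm d, ← mul_assoc]
  have h_card : #{ij ∈ range 5 ×ˢ range 5 | (Nat.gcd ij.1 ij.2).Coprime 5} = 24 := by decide
  simp only [h_term]
  rw [sum_prod_one_sub_pow_gcd_eq_card hζ, h_card]
  push_cast
  field_simp
  norm_num

end

theorem isPrimitiveRoot_zeta5 : IsPrimitiveRoot zeta5 5 :=
  isPrimitiveRoot_exp 5 (by norm_num)

theorem statement18 :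
    (1 / 5 : ℂ) * ∑ i ∈ Finset.range 5, ∑ j ∈ Finset.range 5,
      (1 - zeta5 ^ Nat.gcd (Nat.gcd i j) 5) * (1 - (zeta5 ^ Nat.gcd (Nat.gcd i j) 5)⁻¹) *
      (1 - zeta5 ^ (2 * Nat.gcd (Nat.gcd i j) 5)) *
      (1 - (zeta5 ^ (2 * Nat.gcd (Nat.gcd i j) 5))⁻¹) = 24 :=
  statement18_general isPrimitiveRoot_zeta5
end
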